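/- arXiv:1205.3474 — 3 statements merged into one kernel-verified Lean document; each statement's English description precedes it below -/
import Mathlib

section
/- Let α1, α2, Δ be real numbers with 0 ≤ α2 ≤ α1 < 1 and 0 < Δ < (1 − 2α1 + α2)/3, and set ξ = (2 − α1 − α2)/(1 − α1 − Δ), μ = (α1 − α2 + 2Δ)/(1 − α1 − Δ), γ = (α1 − α2 + 2Δ)/(1 − α2). For each integer S ≥ 3 define d1(S) = [(2 − α2) + (2α1 − α2 + 2Δ)·ξ·(∑_{j=0}^{S−3} μ^j) + α2·ξ·μ^{S−3}·γ] / [1 + ξ·(∑_{j=0}^{S−3} μ^j) + ξ·μ^{S−3}·γ]. Then the sequence d1(S) tends to (2 + 2α1 − α2)/3 as S → ∞. -/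
/-! Since `3 * Δ < 1 - 2 * α1 + α2`, the ratio `μ = (α1 - α2 + 2 * Δ) / (1 - α1 - Δ)` lies in
`[0, 1)`. Hence the geometric sums converge to `(1 - μ)⁻¹` and the contribution of the last phase,
which is proportional to `μ ^ (S - 3)`, vanishes. With `E = 1 - 2 * α1 + α2 - 3 * Δ > 0` one has
`ξ / (1 - μ) = (2 - α1 - α2) / E`, so the limit of the denominator is `3 * (1 - α1 - Δ) / E` and
that of the numerator is `(1 - α1 - Δ) * (2 + 2 * α1 - α2) / E`. -/

open Filter

theorem scheme_X1_d1_limit (α1 α2 Δ : ℝ) (h2 : 0 ≤ α2) (h21 : α2 ≤ α1) (h11 : α1 < 1)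
    (hΔ0 : 0 < Δ) (hΔ1 : Δ < (1 - 2 * α1 + α2) / 3) :
    Tendsto (fun S : ℕ =>
      (((2 - α2) + (2 * α1 - α2 + 2 * Δ) * ((2 - α1 - α2) / (1 - α1 - Δ)) *
          (∑ j ∈ Finset.range (S - 2), ((α1 - α2 + 2 * Δ) / (1 - α1 - Δ)) ^ j) +
        α2 * ((2 - α1 - α2) / (1 - α1 - Δ)) * ((α1 - α2 + 2 * Δ) / (1 - α1 - Δ)) ^ (S - 3) *
          ((α1 - α2 + 2 * Δ) / (1 - α2))) /
      (1 + ((2 - α1 - α2) / (1 - α1 - Δ)) *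
          (∑ j ∈ Finset.range (S - 2), ((α1 - α2 + 2 * Δ) / (1 - α1 - Δ)) ^ j) +
        ((2 - α1 - α2) / (1 - α1 - Δ)) * ((α1 - α2 + 2 * Δ) / (1 - α1 - Δ)) ^ (S - 3) *
          ((α1 - α2 + 2 * Δ) / (1 - α2)))))
      atTop (nhds ((2 + 2 * α1 - α2) / 3)) := by
  have hD : 0 < 1 - α1 - Δ := by linarith
  -- `E` is kept opaque so that `field_simp` treats it as an atom.
  obtain ⟨E, hEdef⟩ : ∃ E, E = 1 - 2 * α1 + α2 - 3 * Δ := ⟨_, rfl⟩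
  have hE : 0 < E := by linarith
  set μ := (α1 - α2 + 2 * Δ) / (1 - α1 - Δ) with hμ
  set ξ := (2 - α1 - α2) / (1 - α1 - Δ) with hξ
  set γ := (α1 - α2 + 2 * Δ) / (1 - α2)
  have hμ0 : 0 ≤ μ := div_nonneg (by linarith) hD.le
  have hμ1 : μ < 1 := (div_lt_one hD).2 (by linarith)
  have hsum : Tendsto (fun S : ℕ => ∑ j ∈ Finset.range (S - 2), μ ^ j) atTop
      (nhds (1 - μ)⁻¹) :=
    (hasSum_geometric_of_lt_one hμ0 hμ1).tendsto_sum_nat.comp (tendsto_sub_atTop_nat 2)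
  have hpow : Tendsto (fun S : ℕ => μ ^ (S - 3)) atTop (nhds 0) :=
    (tendsto_pow_atTop_nhds_zero_of_lt_one hμ0 hμ1).comp (tendsto_sub_atTop_nat 3)
  have hkey : ξ * (1 - μ)⁻¹ = (2 - α1 - α2) / E := by
    have h1μ : 1 - μ = E / (1 - α1 - Δ) := by
      rw [hμ, hEdef]; field_simp; ring
    rw [h1μ, hξ]; field_simp
  have hden_eq : 1 + ξ * (1 - μ)⁻¹ + ξ * 0 * γ
      = 3 * (1 - α1 - Δ) / E := by
    rw [hkey]; field_simp; rw [hEdef]; ring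
  have hnum_eq : (2 - α2) + (2 * α1 - α2 + 2 * Δ) * ξ * (1 - μ)⁻¹ + α2 * ξ * 0 * γ
      = (1 - α1 - Δ) * (2 + 2 * α1 - α2) / E := by
    rw [mul_assoc _ ξ, hkey]; field_simp; rw [hEdef]; ring
  have hnum := ((hsum.const_mul ((2 * α1 - α2 + 2 * Δ) * ξ)).const_add (2 - α2)).add
    ((hpow.const_mul (α2 * ξ)).mul_const γ)
  have hden := ((hsum.const_mul ξ).const_add 1).add ((hpow.const_mul ξ).mul_const γ)
  rw [hnum_eq] at hnum
  rw [hden_eq] at hden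
  have hlim := hnum.div hden (div_pos (by linarith) hE).ne'
  have hval : (1 - α1 - Δ) * (2 + 2 * α1 - α2) / E /
      (3 * (1 - α1 - Δ) / E) = (2 + 2 * α1 - α2) / 3 := by
    field_simp
  rw [hval] at hlim
  exact hlim
end

section
/- Let α1, α2, Δ be real numbers with 0 ≤ α2 ≤ α1 < 1 and 0 < Δ < (1 − 2α1 + α2)/3, and set ξ = (2 − α1 − α2)/(1 − α1 − Δ), μ = (α1 − α2 + 2Δ)/(1 − α1 − Δ), γ = (α1 − α2 + 2Δ)/(1 − α2). For each integer S ≥ 3 define d2(S) = [(2 − α1) + (α1 + 2Δ)·ξ·(∑_{j=0}^{S−3} μ^j) + α2·ξ·μ^{S−3}·γ] / [1 + ξ·(∑_{j=0}^{S−3} μ^j) + ξ·μ^{S−3}·γ]. Then the sequence d2(S) tends to (2 + 2α2 − α1)/3 as S → ∞. -/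
/-!
The hypothesis `Δ < (1 - 2 * α1 + α2) / 3` says exactly that the nonnegative
ratio `μ = (α1 - α2 + 2 * Δ) / (1 - α1 - Δ)` is less than `1`. Hence, writing
`ξ = (2 - α1 - α2) / (1 - α1 - Δ)`, the geometric sums converge to
`(1 - μ)⁻¹` and the last-phase terms, multiples of `μ ^ (S - 3)`, vanish. The limit is therefore
`((2 - α1) + (α1 + 2 * Δ) * ξ * (1 - μ)⁻¹) / (1 + ξ * (1 - μ)⁻¹)`. After multiplying through by
`E = 1 - 2 * α1 + α2 - 3 * Δ`, the denominator is `3 * (1 - α1 - Δ)` and the numerator is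
`(2 + 2 * α2 - α1) * (1 - α1 - Δ)`, so `Δ` cancels.
-/

open Filter

theorem scheme_X1_d2_limit (α1 α2 Δ : ℝ) (h2 : 0 ≤ α2) (h21 : α2 ≤ α1) (h11 : α1 < 1)
    (hΔ0 : 0 < Δ) (hΔ1 : Δ < (1 - 2 * α1 + α2) / 3) :
    Tendsto (fun S : ℕ =>
      (((2 - α1) + (α1 + 2 * Δ) * ((2 - α1 - α2) / (1 - α1 - Δ)) *
          (∑ j ∈ Finset.range (S - 2), ((α1 - α2 + 2 * Δ) / (1 - α1 - Δ)) ^ j) +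
        α2 * ((2 - α1 - α2) / (1 - α1 - Δ)) * ((α1 - α2 + 2 * Δ) / (1 - α1 - Δ)) ^ (S - 3) *
          ((α1 - α2 + 2 * Δ) / (1 - α2))) /
      (1 + ((2 - α1 - α2) / (1 - α1 - Δ)) *
          (∑ j ∈ Finset.range (S - 2), ((α1 - α2 + 2 * Δ) / (1 - α1 - Δ)) ^ j) +
        ((2 - α1 - α2) / (1 - α1 - Δ)) * ((α1 - α2 + 2 * Δ) / (1 - α1 - Δ)) ^ (S - 3) *
          ((α1 - α2 + 2 * Δ) / (1 - α2)))))
      atTop (nhds ((2 + 2 * α2 - α1) / 3)) := by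
  have hD : 0 < 1 - α1 - Δ := by linarith
  have hE : 0 < 1 - 2 * α1 + α2 - 3 * Δ := by linarith
  have hμ0 : 0 ≤ (α1 - α2 + 2 * Δ) / (1 - α1 - Δ) := div_nonneg (by linarith) hD.le
  have hμ1 : (α1 - α2 + 2 * Δ) / (1 - α1 - Δ) < 1 := by
    rw [div_lt_one hD]; linarith
  have hlim : (1 - (α1 - α2 + 2 * Δ) / (1 - α1 - Δ))⁻¹ =
      (1 - α1 - Δ) / (1 - 2 * α1 + α2 - 3 * Δ) := by
    rw [one_sub_div hD.ne', inv_div]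
    congr 1
    ring
  have hξ : (2 - α1 - α2) / (1 - α1 - Δ) * ((1 - α1 - Δ) / (1 - 2 * α1 + α2 - 3 * Δ)) =
      (2 - α1 - α2) / (1 - 2 * α1 + α2 - 3 * Δ) := div_mul_div_cancel₀ hD.ne'
  have hsum := (hasSum_geometric_of_lt_one hμ0 hμ1).tendsto_sum_nat.comp
    (tendsto_sub_atTop_nat 2)
  have hpow := (tendsto_pow_atTop_nhds_zero_of_lt_one hμ0 hμ1).comp (tendsto_sub_atTop_nat 3)
  rw [hlim] at hsum
  generalize (α1 - α2 + 2 * Δ) / (1 - α1 - Δ) = μ at *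
  generalize (2 - α1 - α2) / (1 - α1 - Δ) = ξ at *
  generalize (α1 - α2 + 2 * Δ) / (1 - α2) = γ at *
  have hden : 1 + ξ * ((1 - α1 - Δ) / (1 - 2 * α1 + α2 - 3 * Δ)) + ξ * 0 * γ =
      3 * (1 - α1 - Δ) / (1 - 2 * α1 + α2 - 3 * Δ) := by
    rw [hξ]
    field_simp
    ring
  have hnum : (2 - α1) + (α1 + 2 * Δ) * ξ * ((1 - α1 - Δ) / (1 - 2 * α1 + α2 - 3 * Δ)) +
      α2 * ξ * 0 * γ =
      (2 + 2 * α2 - α1) * (1 - α1 - Δ) / (1 - 2 * α1 + α2 - 3 * Δ) := by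
    rw [mul_assoc (α1 + 2 * Δ), hξ, mul_zero, zero_mul, add_zero, eq_div_iff hE.ne', add_mul,
      mul_assoc (α1 + 2 * Δ), div_mul_cancel₀ _ hE.ne']
    ring
  have key := (((hsum.const_mul ((α1 + 2 * Δ) * ξ)).const_add (2 - α1)).add
    ((hpow.const_mul (α2 * ξ)).mul_const γ)).div
    (((hsum.const_mul ξ).const_add 1).add ((hpow.const_mul ξ).mul_const γ))
    (by rw [hden]; positivity)
  rw [hnum, hden, div_div_div_cancel_right₀ hE.ne', mul_div_mul_right _ _ hD.ne'] at key
  exact key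
end

section
/- Let α1, α2 be real numbers with 0 ≤ α2 < α1 < 1 and 2α1 − α2 > 1, and set τ = (1 − α2)/(1 − α1), β = (α1 − α2)/(1 − α1), η = (α1 − α2)/(1 − α2). For each integer S ≥ 3 define d2(S) = [α1·(1 + τ·∑_{j=0}^{S−3} β^j) + α2·τ·β^{S−3}·η] / [1 + τ·(∑_{j=0}^{S−3} β^j) + τ·β^{S−3}·η]. Then the sequence d2(S) tends to (1 + α2)/2 as S → ∞. -/
/-!
Write `τ = (1 - α2) / (1 - α1)`, `β = (α1 - α2) / (1 - α1) > 1`, `η = (α1 - α2) / (1 - α2)`, so that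
`τ * η = β`. Summing the geometric series and dividing numerator and denominator by `β ^ (S - 3)`
expresses `d2(S)` as a rational function of `β⁻¹ ^ (S - 3)`, which tends to `0`
(`tendsto_geom_ratio`). The value of that function at `0` is
`(α1 * τ + α2 * (β - 1)) / (τ + (β - 1))`, and after multiplying through by `1 - α1` this is
`(α1 - α2) * (1 + α2) / (2 * (α1 - α2))`.
-/

open Filter

/-- The limit for arbitrary `β > 1` and `τ > 0`; the last phase contributes `β ^ n * β`, where
the second factor `β` plays the role of `τ * η`. -/
lemma tendsto_geom_ratio (a b τ β : ℝ) (hτ : 0 < τ) (hβ : 1 < β) :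
    Tendsto (fun n : ℕ =>
      (a * (1 + τ * ∑ j ∈ Finset.range (n + 1), β ^ j) + b * (β ^ n * β)) /
        (1 + τ * (∑ j ∈ Finset.range (n + 1), β ^ j) + β ^ n * β))
      atTop (nhds ((a * τ + b * (β - 1)) / (τ + (β - 1)))) := by
  have hβ0 : 0 < β := by linarith
  have hβ1 : 0 < β - 1 := by linarith
  have hr : Tendsto (fun n : ℕ => β⁻¹ ^ n) atTop (nhds 0) :=
    tendsto_pow_atTop_nhds_zero_of_lt_one (by positivity) (inv_lt_one_of_one_lt₀ hβ)
  have hden : (0 : ℝ) + τ * ((β - 0) / (β - 1)) + β ≠ 0 := by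
    rw [sub_zero, zero_add]
    positivity
  have hu : Tendsto (fun n : ℕ => β⁻¹ ^ n + τ * ((β - β⁻¹ ^ n) / (β - 1))) atTop
      (nhds (0 + τ * ((β - 0) / (β - 1)))) :=
    hr.add (((hr.const_sub β).div_const (β - 1)).const_mul τ)
  have key := ((hu.const_mul a).add_const (b * β)).div (hu.add_const β) hden
  convert key using 1
  · funext n
    have hp : β ^ n ≠ 0 := by positivity
    -- both sides differ by the common factor `β ^ n`
    rw [Pi.div_apply, geom_sum_eq hβ.ne', inv_pow]
    symm
    rw [← mul_div_mul_left _ _ hp]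
    congr 1 <;> field_simp <;> ring
  · congr 1
    have h : τ + (β - 1) ≠ 0 := by positivity
    rw [← mul_div_mul_left _ _ (div_pos hβ0 hβ1).ne']
    congr 1 <;> field_simp <;> ring

theorem scheme_X2_d2_limit_case2 (α1 α2 : ℝ) (h2 : 0 ≤ α2) (h21 : α2 < α1) (h11 : α1 < 1)
    (hcase : 1 < 2 * α1 - α2) :
    Tendsto (fun S : ℕ =>
      ((α1 * (1 + ((1 - α2) / (1 - α1)) *
          (∑ j ∈ Finset.range (S - 2), ((α1 - α2) / (1 - α1)) ^ j)) +
        α2 * ((1 - α2) / (1 - α1)) * ((α1 - α2) / (1 - α1)) ^ (S - 3) *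
          ((α1 - α2) / (1 - α2))) /
      (1 + ((1 - α2) / (1 - α1)) *
          (∑ j ∈ Finset.range (S - 2), ((α1 - α2) / (1 - α1)) ^ j) +
        ((1 - α2) / (1 - α1)) * ((α1 - α2) / (1 - α1)) ^ (S - 3) *
          ((α1 - α2) / (1 - α2)))))
      atTop (nhds ((1 + α2) / 2)) := by
  have h1 : 0 < 1 - α1 := by linarith
  have h3 : 0 < 1 - α2 := by linarith
  have h4 : 0 < α1 - α2 := by linarith
  have hβ : 1 < (α1 - α2) / (1 - α1) := by
    rw [one_lt_div h1]
    linarith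
  have hτη : (1 - α2) / (1 - α1) * ((α1 - α2) / (1 - α2)) = (α1 - α2) / (1 - α1) := by
    field_simp
  have hlim : (1 + α2) / 2 =
      (α1 * ((1 - α2) / (1 - α1)) + α2 * ((α1 - α2) / (1 - α1) - 1)) /
        ((1 - α2) / (1 - α1) + ((α1 - α2) / (1 - α1) - 1)) := by
    have hd : (1 - α2) / (1 - α1) + ((α1 - α2) / (1 - α1) - 1) =
        2 * (α1 - α2) / (1 - α1) := by
      field_simp
      ring
    rw [hd]
    field_simp
    ring
  rw [← tendsto_add_atTop_iff_nat 3, hlim]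
  refine (tendsto_geom_ratio α1 α2 _ _ (div_pos h3 h1) hβ).congr fun n => ?_
  rw [show n + 3 - 2 = n + 1 by lia, Nat.add_sub_cancel]
  have hlast : (1 - α2) / (1 - α1) * ((α1 - α2) / (1 - α1)) ^ n * ((α1 - α2) / (1 - α2)) =
      ((α1 - α2) / (1 - α1)) ^ n * ((α1 - α2) / (1 - α1)) := by
    rw [mul_right_comm, hτη, mul_comm]
  rw [mul_assoc α2, mul_assoc α2, hlast]
end
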